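/- There exists a constant s₀ > 0, independent of m, with the following property: for every integer m ≥ 1 and every axially symmetric function f that is continuously differentiable on a neighborhood of the closure of D_m and satisfies either (i) f = 0 on the horizontal boundary ∂^H D_m, or (ii) ∫_{D_m ∩ {r = c}} f(c, x₃) dx₃ = 0 for every c ∈ (2^{-m}, 1), one has (∫_{D_m} |f|⁶ dx)^{1/6} ≤ s₀ (∫_{D_m} |∇f|² dx)^{1/2}. -/

import Mathlib

noncomputable section

open Real MeasureTheory Set

/-- Inner radius of the `j`-th rectangle: `r_j = 2^(-j)`. -/
def rW (j : ℕ) : ℝ := (2 : ℝ) ^ (-(j : ℝ))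

/-- Height of the `j`-th rectangle: `h_j = 2^(-β (j-1))`. -/
def hH (β : ℝ) (j : ℕ) : ℝ := (2 : ℝ) ^ (-β * ((j : ℝ) - 1))

/-- The rectangle `S_j` in the `(r, x₃)` cross-section. -/
def Srect (β : ℝ) (j : ℕ) : Set (ℝ × ℝ) :=
  {p : ℝ × ℝ | rW j ≤ p.1 ∧ p.1 < rW (j - 1) ∧ 0 < p.2 ∧ p.2 < hH β j}

/-- The `(r, x₃)` cross-section of the domain `D_m`. -/
def Ddom (β : ℝ) (m : ℕ) : Set (ℝ × ℝ) := ⋃ j ∈ Finset.Icc 1 m, Srect β j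

/-- The horizontal part `∂^H D_m` of the boundary of `D_m` (where `x₃` is locally constant). -/
def bdH (β : ℝ) (m : ℕ) : Set (ℝ × ℝ) :=
  {p : ℝ × ℝ | p.2 = 0 ∧ rW m ≤ p.1 ∧ p.1 ≤ 1} ∪
    ⋃ j ∈ Finset.Icc 1 m,
      {p : ℝ × ℝ | p.2 = hH β j ∧ rW j ≤ p.1 ∧ p.1 ≤ rW (j - 1)}

/-- The vertical part `∂^V D_m` of the boundary of `D_m` (where `r` is locally constant). -/
def bdV (β : ℝ) (m : ℕ) : Set (ℝ × ℝ) :=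
  {p : ℝ × ℝ | p.1 = 1 ∧ 0 ≤ p.2 ∧ p.2 ≤ 1} ∪
    {p : ℝ × ℝ | p.1 = rW m ∧ 0 ≤ p.2 ∧ p.2 ≤ hH β m} ∪
    ⋃ j ∈ Finset.Icc 1 (m - 1),
      {p : ℝ × ℝ | p.1 = rW j ∧ hH β (j + 1) ≤ p.2 ∧ p.2 ≤ hH β j}

/-- The full boundary `∂ D_m` of `D_m`. -/
def bdD (β : ℝ) (m : ℕ) : Set (ℝ × ℝ) := bdH β m ∪ bdV β m

/-- The corner points of the polygonal cross-section of `D_m`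
(i.e. the corner circles of the 3D domain). -/
def cornerSet (β : ℝ) (m : ℕ) : Set (ℝ × ℝ) :=
  ({(rW m, 0), ((1 : ℝ), 0), ((1 : ℝ), (1 : ℝ)), (rW m, hH β m)} : Set (ℝ × ℝ)) ∪
    ⋃ j ∈ Finset.Icc 1 (m - 1),
      ({(rW j, hH β j), (rW j, hH β (j + 1))} : Set (ℝ × ℝ))

/-- Radial partial derivative `∂_r`. -/
def pdr (F : ℝ × ℝ → ℝ) (p : ℝ × ℝ) : ℝ := deriv (fun r => F (r, p.2)) p.1

/-- Vertical partial derivative `∂_{x₃}`. -/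
def pdz (F : ℝ × ℝ → ℝ) (p : ℝ × ℝ) : ℝ := deriv (fun z => F (p.1, z)) p.2

/-- The axially symmetric Laplacian `Δ = ∂_r² + (1/r) ∂_r + ∂_{x₃}²`. -/
def cylLap (F : ℝ × ℝ → ℝ) (p : ℝ × ℝ) : ℝ :=
  pdr (pdr F) p + (1 / p.1) * pdr F p + pdz (pdz F) p

/-- The integral of an axially symmetric function over the 3-dimensional domain `D_m`,
computed in the cross-section: `∫_{D_m} f dx = 2π ∬ F r dr dx₃`. -/
def cylIntegral (β : ℝ) (m : ℕ) (F : ℝ × ℝ → ℝ) : ℝ :=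
  ∫ p in Ddom β m, F p * (2 * π * p.1)

/-- The vertical cross-section segment `D_m ∩ {r = c}` of the cross-section. -/
def vertSeg (β : ℝ) (m : ℕ) (c : ℝ) : Set ℝ := {z : ℝ | (c, z) ∈ Ddom β m}


lemma aux_cs {α : Type*} [MeasurableSpace α] (P : Measure α) (X Y : α → ℝ)
    (hX : Integrable (fun p => X p ^ 2) P) (hY : Integrable (fun p => Y p ^ 2) P)
    (hXY : Integrable (fun p => X p * Y p) P) :
    (∫ p, X p * Y p ∂P) ^ 2 ≤ (∫ p, X p ^ 2 ∂P) * (∫ p, Y p ^ 2 ∂P) := by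
  have key : ∀ t : ℝ, 0 ≤ (∫ p, X p ^ 2 ∂P) * (t * t) + (-2 * ∫ p, X p * Y p ∂P) * t
      + ∫ p, Y p ^ 2 ∂P := by
    intro t
    have h0 : 0 ≤ ∫ p, ((t * t) * X p ^ 2 + ((-2 * t) * (X p * Y p) + Y p ^ 2)) ∂P := by
      apply integral_nonneg
      intro p
      have := sq_nonneg (t * X p - Y p)
      simp only [Pi.zero_apply]
      nlinarith
    rw [integral_add (hX.const_mul _) (Integrable.fun_add (hXY.const_mul _) hY),
      integral_add (hXY.const_mul _) hY, integral_const_mul, integral_const_mul] at h0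
    linarith
  have := discrim_le_zero key
  unfold discrim at this
  nlinarith

lemma aux_ftc {a b : ℝ} (g g' : ℝ → ℝ) (hg : Continuous g) (hg' : Continuous g')
    (hd : ∀ x ∈ Ioo a b, HasDerivAt g (g' x) x) (x y : ℝ) (hx : x ∈ Icc a b) (hy : y ∈ Icc a b) :
    |g x| ≤ |g y| + ∫ t in Ioo a b, |g' t| := by
  have main : ∀ x ∈ Icc a b, ∀ y ∈ Icc a b, x ≤ y → |g y - g x| ≤ ∫ t in Ioo a b, |g' t| := by
    intro x hx y hy hxy
    rw [← intervalIntegral.integral_eq_sub_of_hasDerivAt_of_le hxy hg.continuousOn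
      (fun t ht => hd t ⟨hx.1.trans_lt ht.1, ht.2.trans_le hy.2⟩) (hg'.intervalIntegrable _ _)]
    refine (intervalIntegral.abs_integral_le_integral_abs hxy).trans ?_
    rw [intervalIntegral.integral_of_le hxy, integral_Ioc_eq_integral_Ioo]
    apply setIntegral_mono_set
    · exact (hg'.abs.integrableOn_Icc (a := a) (b := b)).mono_set Ioo_subset_Icc_self
    · exact Filter.Eventually.of_forall fun t => abs_nonneg _
    · exact (Ioo_subset_Ioo hx.1 hy.2).eventuallyLE
  rcases le_total x y with h | h
  · have := main x hx y hy h
    rw [abs_sub_comm] at this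
    have := abs_sub_abs_le_abs_sub (g x) (g y)
    linarith
  · have := main y hy x hx h
    have := abs_sub_abs_le_abs_sub (g x) (g y)
    linarith

lemma aux_int {a b h : ℝ} (g : ℝ × ℝ → ℝ) (hg : Continuous g) :
    Integrable g ((volume.restrict (Ioo a b)).prod (volume.restrict (Ioo 0 h))) := by
  rw [Measure.prod_restrict]
  have : IntegrableOn g (Icc a b ×ˢ Icc 0 h) (volume.prod volume) :=
    hg.continuousOn.integrableOn_compact (isCompact_Icc.prod isCompact_Icc)
  exact this.mono_set (prod_mono Ioo_subset_Icc_self Ioo_subset_Icc_self)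

lemma aux_int1 {a b : ℝ} (g : ℝ → ℝ) (hg : Continuous g) :
    Integrable g (volume.restrict (Ioo a b)) :=
  (hg.integrableOn_Icc (a := a) (b := b)).mono_set Ioo_subset_Icc_self

lemma aux_ae {a b h : ℝ} (p : ℝ × ℝ → Prop) (hp : ∀ r ∈ Ioo a b, ∀ z ∈ Ioo 0 h, p (r, z)) :
    ∀ᵐ q ∂((volume.restrict (Ioo a b)).prod (volume.restrict (Ioo 0 h))), p q := by
  rw [Measure.prod_restrict]
  filter_upwards [ae_restrict_mem (measurableSet_Ioo.prod measurableSet_Ioo)] with q hq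
  exact hp q.1 hq.1 q.2 hq.2

lemma aux_step {a b h : ℝ} (hab : a < b) (h0 : 0 < h) (f fr fz : ℝ × ℝ → ℝ)
    (hf : Continuous f) (hfr : Continuous fr) (hfz : Continuous fz)
    (hdr : ∀ z ∈ Icc 0 h, ∀ r ∈ Ioo a b, HasDerivAt (fun s => f (s, z)) (fr (r, z)) r)
    (hdz : ∀ r ∈ Icc a b, ∀ z ∈ Ioo 0 h, HasDerivAt (fun s => f (r, s)) (fz (r, z)) z)
    (hz : ∀ r ∈ Ioo a b, ∃ z ∈ Icc 0 h, f (r, z) = 0) (k : ℕ) (P : Measure (ℝ × ℝ))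
    (hP : P = (volume.restrict (Ioo a b)).prod (volume.restrict (Ioo 0 h))) :
    ∫ p, (f p ^ (k+1)) ^ 2 ∂P ≤
      ((∫ p, |f p| ^ k * |f p| ∂P) / (b - a) + (k+1) * ∫ p, |f p| ^ k * |fr p| ∂P) *
        ((k+1) * ∫ p, |f p| ^ k * |fz p| ∂P) := by
  have hw : 0 < b - a := sub_pos.2 hab
  set A : ℝ × ℝ → ℝ := fun p => (|f p| ^ k * |f p|) / (b - a) + (k+1) * (|f p| ^ k * |fr p|) with hA
  set B : ℝ × ℝ → ℝ := fun p => (k+1) * (|f p| ^ k * |fz p|) with hB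
  have cA : Continuous A := by fun_prop
  have cB : Continuous B := by fun_prop
  have iA := aux_int (a := a) (b := b) (h := h) A cA
  have iB := aux_int (a := a) (b := b) (h := h) B cB
  have bA : ∀ r ∈ Ioo a b, ∀ z ∈ Ioo 0 h, |f (r, z) ^ (k+1)| ≤ ∫ s in Ioo a b, A (s, z) := by
    intro r hr z hz
    set I := ∫ t in Ioo a b, |((k+1 : ℕ):ℝ) * f (t, z) ^ k * fr (t, z)| with hI
    have e : ∀ s ∈ Ioo a b, |f (r, z) ^ (k+1)| ≤ |f (s, z) ^ (k+1)| + I := by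
      intro s hs
      apply aux_ftc (a := a) (b := b) (fun t => f (t, z) ^ (k+1))
        (fun t => ((k+1 : ℕ):ℝ) * f (t, z) ^ k * fr (t, z)) (by fun_prop) (by fun_prop)
      · intro t ht
        simpa using (hdr z (Ioo_subset_Icc_self hz) t ht).fun_pow (k+1)
      · exact Ioo_subset_Icc_self hr
      · exact Ioo_subset_Icc_self hs
    have e2 : ∫ s in Ioo a b, |f (r, z) ^ (k+1)| ≤ ∫ s in Ioo a b, (|f (s, z) ^ (k+1)| + I) := by
      apply setIntegral_mono_on _ _ measurableSet_Ioo e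
      · exact aux_int1 _ (by fun_prop)
      · exact aux_int1 _ (by fun_prop)
    rw [integral_add (aux_int1 _ (by fun_prop)) (aux_int1 _ (by fun_prop))] at e2
    simp only [integral_const, measureReal_restrict_apply_univ, Real.volume_real_Ioo_of_le hab.le,
      smul_eq_mul] at e2
    have e3 : ∫ s in Ioo a b, A (s, z) = (∫ s in Ioo a b, |f (s, z) ^ (k+1)|) / (b - a) + I := by
      rw [hI, ← integral_div, ← integral_add (aux_int1 _ (by fun_prop)) (aux_int1 _ (by fun_prop))]
      congr 1
      ext s
      simp only [hA, abs_mul, abs_pow, pow_succ, Nat.abs_cast]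
      push_cast
      ring
    rw [e3, ← sub_le_iff_le_add, le_div_iff₀ hw]
    linarith
  have bB : ∀ r ∈ Ioo a b, ∀ z ∈ Ioo 0 h, |f (r, z) ^ (k+1)| ≤ ∫ s in Ioo 0 h, B (r, s) := by
    intro r hr z hzz
    obtain ⟨z0, hz0, hfz0⟩ := hz r hr
    have := aux_ftc (a := 0) (b := h) (fun t => f (r, t) ^ (k+1))
        (fun t => ((k+1 : ℕ):ℝ) * f (r, t) ^ k * fz (r, t)) (by fun_prop) (by fun_prop)
        (by
          intro t ht
          simpa using (hdz r (Ioo_subset_Icc_self hr) t ht).fun_pow (k+1)) z z0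
          (Ioo_subset_Icc_self hzz) hz0
    simp only [hfz0] at this
    rw [zero_pow (by omega), abs_zero, zero_add] at this
    refine this.trans_eq ?_
    congr 1
    ext s
    simp only [hB, abs_mul, abs_pow, Nat.abs_cast]
    push_cast
    ring
  have eA : ∫ p, A p ∂P = (∫ p, |f p| ^ k * |f p| ∂P) / (b - a) + (k+1) * ∫ p, |f p| ^ k * |fr p| ∂P := by
    rw [hA, integral_add, integral_div, integral_const_mul]
    · rw [hP]; exact aux_int _ (by fun_prop)
    · rw [hP]; exact aux_int _ (by fun_prop)
  have eB : ∫ p, B p ∂P = (k+1) * ∫ p, |f p| ^ k * |fz p| ∂P := by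
    rw [hB, integral_const_mul]
  rw [← eA, ← eB, hP, integral_prod_symm _ iA, integral_prod _ iB, mul_comm, ← integral_prod_mul]
  apply integral_mono_ae
  · exact aux_int _ (by fun_prop)
  · exact (iB.integral_prod_left).mul_prod (iA.integral_prod_right)
  · apply aux_ae
    intro r hr z hz
    have h1 := bA r hr z hz
    have h2 := bB r hr z hz
    simp only
    rw [← sq_abs, sq]
    exact mul_le_mul h2 h1 (abs_nonneg _) ((abs_nonneg _).trans h2)

lemma aux_poinc {a b h : ℝ} (h0 : 0 < h) (f fz : ℝ × ℝ → ℝ)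
    (hf : Continuous f) (hfz : Continuous fz)
    (hdz : ∀ r ∈ Icc a b, ∀ z ∈ Ioo 0 h, HasDerivAt (fun s => f (r, s)) (fz (r, z)) z)
    (hz : ∀ r ∈ Ioo a b, ∃ z ∈ Icc 0 h, f (r, z) = 0) (P : Measure (ℝ × ℝ))
    (hP : P = (volume.restrict (Ioo a b)).prod (volume.restrict (Ioo 0 h))) :
    ∫ p, f p ^ 2 ∂P ≤ h ^ 2 * ∫ p, fz p ^ 2 ∂P := by
  have iB := aux_int (a := a) (b := b) (h := h) (fun p => fz p ^ 2) (by fun_prop)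
  have key : ∀ r ∈ Ioo a b, ∀ z ∈ Ioo 0 h, f (r, z) ^ 2 ≤ (∫ s in Ioo 0 h, fz (r, s) ^ 2) * h := by
    intro r hr z hzz
    obtain ⟨z0, hz0, hfz0⟩ := hz r hr
    have h1 := aux_ftc (a := 0) (b := h) (fun t => f (r, t)) (fun t => fz (r, t))
      (by fun_prop) (by fun_prop) (hdz r (Ioo_subset_Icc_self hr)) z z0
          (Ioo_subset_Icc_self hzz) hz0
    simp only [hfz0, abs_zero, zero_add] at h1
    have h2 := aux_cs (volume.restrict (Ioo 0 h)) (fun s => |fz (r, s)|) (fun _ => 1)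
      (aux_int1 _ (by fun_prop)) (aux_int1 _ (by fun_prop)) (aux_int1 _ (by fun_prop))
    simp only [mul_one, sq_abs, one_pow, integral_const, measureReal_restrict_apply_univ,
      Real.volume_real_Ioo_of_le h0.le, smul_eq_mul, sub_zero] at h2
    rw [← sq_abs]
    exact (pow_le_pow_left₀ (abs_nonneg _) h1 2).trans h2
  have e : h ^ 2 * ∫ p, fz p ^ 2 ∂P = ∫ p, (∫ s in Ioo 0 h, fz (p.1, s) ^ 2) * h ∂P := by
    rw [hP, integral_prod_mul (fun r => ∫ s in Ioo 0 h, fz (r, s) ^ 2) (fun _ => h),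
      integral_prod _ iB]
    simp only [integral_const, measureReal_restrict_apply_univ,
      Real.volume_real_Ioo_of_le h0.le, smul_eq_mul, sub_zero]
    ring
  rw [e, hP]
  apply integral_mono_ae
  · exact aux_int _ (by fun_prop)
  · exact (iB.integral_prod_left).mul_prod (aux_int1 _ continuous_const)
  · exact aux_ae _ key

lemma aux_step2 {a b h : ℝ} (hab : a < b) (h0 : 0 < h) (hh : h ≤ 2 * (b - a)) (f fr fz : ℝ × ℝ → ℝ)
    (hf : Continuous f) (hfr : Continuous fr) (hfz : Continuous fz)
    (hdr : ∀ z ∈ Icc 0 h, ∀ r ∈ Ioo a b, HasDerivAt (fun s => f (s, z)) (fr (r, z)) r)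
    (hdz : ∀ r ∈ Icc a b, ∀ z ∈ Ioo 0 h, HasDerivAt (fun s => f (r, s)) (fz (r, z)) z)
    (hz : ∀ r ∈ Ioo a b, ∃ z ∈ Icc 0 h, f (r, z) = 0) (k : ℕ) (P : Measure (ℝ × ℝ))
    (hP : P = (volume.restrict (Ioo a b)).prod (volume.restrict (Ioo 0 h))) :
    ∫ p, (f p ^ (k+1)) ^ 2 ∂P ≤
      (k + 3) * (k + 1) * ((∫ p, (f p ^ k) ^ 2 ∂P) * ∫ p, (fr p ^ 2 + fz p ^ 2) ∂P) := by
  have hw : 0 < b - a := sub_pos.2 hab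
  have I : ∀ g : ℝ × ℝ → ℝ, Continuous g → Integrable g P := by
    intro g hg; rw [hP]; exact aux_int g hg
  set E := ∫ p, (fr p ^ 2 + fz p ^ 2) ∂P with hE
  set M := ∫ p, (f p ^ k) ^ 2 ∂P with hM
  have M0 : 0 ≤ M := integral_nonneg fun p => by positivity
  have E0 : 0 ≤ E := integral_nonneg fun p => by positivity
  have er : ∫ p, fr p ^ 2 ∂P ≤ E := by
    apply integral_mono (I _ (by fun_prop)) (I _ (by fun_prop))
    intro p; simp only; nlinarith [sq_nonneg (fz p)]
  have ez : ∫ p, fz p ^ 2 ∂P ≤ E := by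
    apply integral_mono (I _ (by fun_prop)) (I _ (by fun_prop))
    intro p; simp only; nlinarith [sq_nonneg (fr p)]
  have cs : ∀ g : ℝ × ℝ → ℝ, Continuous g → (∫ p, |f p| ^ k * |g p| ∂P) ^ 2 ≤ M * ∫ p, g p ^ 2 ∂P := by
    intro g hg
    have := aux_cs P (fun p => |f p| ^ k) (fun p => |g p|) (I _ (by fun_prop)) (I _ (by fun_prop)) (I _ (by fun_prop))
    have e : ∀ p, (|f p| ^ k) ^ 2 = (f p ^ k) ^ 2 := fun p => by rw [← abs_pow, sq_abs]
    simpa only [sq_abs, e] using this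
  have n0 : ∀ g : ℝ × ℝ → ℝ, 0 ≤ ∫ p, |f p| ^ k * |g p| ∂P := fun g =>
    integral_nonneg fun p => by positivity
  have hs := aux_step hab h0 f fr fz hf hfr hfz hdr hdz hz k P hP
  have hp := aux_poinc h0 f fz hf hfz hdz hz P hP
  have Q0 := Real.sqrt_nonneg (M * E)
  have QQ := Real.sq_sqrt (mul_nonneg M0 E0)
  set Q := √(M * E)
  have b1 : ∫ p, |f p| ^ k * |f p| ∂P ≤ h * Q := by
    refine (sq_le_sq₀ (n0 _) (by positivity)).1 ?_
    rw [mul_pow, QQ]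
    calc _ ≤ _ := cs f hf
      _ ≤ M * (h ^ 2 * E) := by gcongr; exact hp.trans (by gcongr)
      _ = _ := by ring
  have b2 : ∫ p, |f p| ^ k * |fr p| ∂P ≤ Q := by
    refine (sq_le_sq₀ (n0 _) (by positivity)).1 ?_
    rw [QQ]
    exact (cs fr hfr).trans (by gcongr)
  have b3 : ∫ p, |f p| ^ k * |fz p| ∂P ≤ Q := by
    refine (sq_le_sq₀ (n0 _) (by positivity)).1 ?_
    rw [QQ]
    exact (cs fz hfz).trans (by gcongr)
  have b4 : (∫ p, |f p| ^ k * |f p| ∂P) / (b - a) ≤ 2 * Q := by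
    rw [div_le_iff₀ hw]
    nlinarith
  have n2 := n0 fr
  have n3 := n0 fz
  calc _ ≤ _ := hs
    _ ≤ (2 * Q + (k+1) * Q) * ((k+1) * Q) := by gcongr
    _ = (k+3) * (k+1) * Q ^ 2 := by ring
    _ = _ := by rw [QQ]

lemma aux_rect {a b h : ℝ} (hab : a < b) (h0 : 0 < h) (hh : h ≤ 2 * (b - a)) (f fr fz : ℝ × ℝ → ℝ)
    (hf : Continuous f) (hfr : Continuous fr) (hfz : Continuous fz)
    (hdr : ∀ z ∈ Icc 0 h, ∀ r ∈ Ioo a b, HasDerivAt (fun s => f (s, z)) (fr (r, z)) r)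
    (hdz : ∀ r ∈ Icc a b, ∀ z ∈ Ioo 0 h, HasDerivAt (fun s => f (r, s)) (fz (r, z)) z)
    (hz : ∀ r ∈ Ioo a b, ∃ z ∈ Icc 0 h, f (r, z) = 0) (P : Measure (ℝ × ℝ))
    (hP : P = (volume.restrict (Ioo a b)).prod (volume.restrict (Ioo 0 h))) :
    ∫ p, |f p| ^ 6 ∂P ≤ 480 * (b - a) ^ 2 * (∫ p, (fr p ^ 2 + fz p ^ 2) ∂P) ^ 3 := by
  have I : ∀ g : ℝ × ℝ → ℝ, Continuous g → Integrable g P := by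
    intro g hg; rw [hP]; exact aux_int g hg
  have h2 := aux_step2 hab h0 hh f fr fz hf hfr hfz hdr hdz hz 1 P hP
  have h3 := aux_step2 hab h0 hh f fr fz hf hfr hfz hdr hdz hz 2 P hP
  have hp := aux_poinc h0 f fz hf hfz hdz hz P hP
  set E := ∫ p, (fr p ^ 2 + fz p ^ 2) ∂P with hE
  have E0 : 0 ≤ E := integral_nonneg fun p => by positivity
  have ez : ∫ p, fz p ^ 2 ∂P ≤ E := by
    apply integral_mono (I _ (by fun_prop)) (I _ (by fun_prop))
    intro p; simp only; nlinarith [sq_nonneg (fr p)]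
  norm_num at h2 h3
  have e6 : ∀ p, |f p| ^ 6 = (f p ^ 3) ^ 2 := fun p => by rw [← sq_abs, abs_pow]; ring
  simp only [e6]
  have hh2 : h ^ 2 ≤ 4 * (b - a) ^ 2 := by nlinarith
  calc _ ≤ _ := h3
    _ ≤ 15 * ((8 * ((h ^ 2 * E) * E)) * E) := by
      gcongr
      refine h2.trans ?_
      gcongr
      exact hp.trans (by gcongr)
    _ = 120 * h ^ 2 * E ^ 3 := by ring
    _ ≤ 120 * (4 * (b - a) ^ 2) * E ^ 3 := by gcongr
    _ = _ := by ring

lemma aux_rWpos (j : ℕ) : 0 < rW j := by unfold rW; positivity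

lemma aux_rW_anti {i j : ℕ} (h : i ≤ j) : rW j ≤ rW i := by
  unfold rW
  apply Real.rpow_le_rpow_of_exponent_le (by norm_num)
  have : (i : ℝ) ≤ j := by exact_mod_cast h
  linarith

lemma aux_rW_zero : rW 0 = 1 := by simp [rW]

lemma aux_rW_pred {j : ℕ} (h : 1 ≤ j) : rW (j - 1) = 2 * rW j := by
  unfold rW
  rw [Nat.cast_sub h, show -((j : ℝ) - (1 : ℕ)) = 1 + -(j : ℝ) by push_cast; ring,
    Real.rpow_add (by norm_num), Real.rpow_one]

lemma aux_hH_le {β : ℝ} (hβ : 1 < β) {j : ℕ} (h : 1 ≤ j) : hH β j ≤ rW (j - 1) := by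
  unfold hH rW
  apply Real.rpow_le_rpow_of_exponent_le (by norm_num)
  rw [Nat.cast_sub h]
  have : (1 : ℝ) ≤ j := by exact_mod_cast h
  push_cast
  nlinarith

lemma aux_hHpos (β : ℝ) (j : ℕ) : 0 < hH β j := by unfold hH; positivity

lemma aux_Srect (β : ℝ) (j : ℕ) : Srect β j = Ico (rW j) (rW (j - 1)) ×ˢ Ioo 0 (hH β j) := by
  ext p
  simp only [Srect, mem_setOf_eq, mem_prod, mem_Ico, mem_Ioo]
  tauto

lemma aux_uniq {i j : ℕ} {r : ℝ} (hi : rW i ≤ r) (hi' : r < rW (i - 1)) (hj : rW j ≤ r)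
    (hj' : r < rW (j - 1)) : i = j := by
  by_contra hne
  rcases Nat.lt_or_gt_of_ne hne with h | h
  · have := aux_rW_anti (show i ≤ j - 1 by omega)
    linarith
  · have := aux_rW_anti (show j ≤ i - 1 by omega)
    linarith

lemma aux_vert {β : ℝ} {m j : ℕ} (hj : j ∈ Finset.Icc 1 m) {r : ℝ} (h1 : rW j ≤ r)
    (h2 : r < rW (j - 1)) : vertSeg β m r = Ioo 0 (hH β j) := by
  ext z
  simp only [vertSeg, Ddom, mem_setOf_eq, mem_iUnion, Srect, mem_Ioo]
  constructor
  · rintro ⟨i, hi, a1, a2, a3, a4⟩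
    have := aux_uniq a1 a2 h1 h2
    subst this
    exact ⟨a3, a4⟩
  · rintro ⟨a3, a4⟩
    exact ⟨j, hj, h1, h2, a3, a4⟩

lemma aux_zero {h : ℝ} (h0 : 0 < h) (g : ℝ → ℝ) (hg : ContinuousOn g (Icc 0 h))
    (hi : ∫ z in Ioo 0 h, g z = 0) : ∃ z ∈ Icc 0 h, g z = 0 := by
  by_contra! hne
  have hint : IntegrableOn g (Ioo 0 h) := (hg.integrableOn_Icc).mono_set Ioo_subset_Icc_self
  have hpos : ∀ u : ℝ → ℝ, IntegrableOn u (Ioo 0 h) → (∀ z ∈ Ioo 0 h, 0 < u z) →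
      0 < ∫ z in Ioo 0 h, u z := by
    intro u hu hp
    rw [setIntegral_pos_iff_support_of_nonneg_ae _ hu]
    · have : Ioo 0 h ⊆ Function.support u ∩ Ioo 0 h := fun z hz => ⟨(hp z hz).ne', hz⟩
      refine lt_of_lt_of_le ?_ (measure_mono this)
      simp [h0]
    · filter_upwards [ae_restrict_mem measurableSet_Ioo] with z hz
      exact (hp z hz).le
  have hc : IsPreconnected (Icc 0 h) := isPreconnected_Icc
  have m0 : (0 : ℝ) ∈ Icc 0 h := ⟨le_rfl, h0.le⟩
  rcases lt_or_gt_of_ne (hne 0 m0) with hs | hs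
  · have : ∀ z ∈ Icc 0 h, g z < 0 := by
      intro z hz
      by_contra! hge
      obtain ⟨y, hy, hy'⟩ := hc.intermediate_value m0 hz hg ⟨hs.le, hge⟩
      exact hne y hy hy'
    have h3 := hpos (fun z => - g z) hint.neg (fun z hz => by
      have := this z (Ioo_subset_Icc_self hz); linarith)
    rw [integral_neg, hi] at h3
    simp at h3
  · have : ∀ z ∈ Icc 0 h, 0 < g z := by
      intro z hz
      by_contra! hge
      obtain ⟨y, hy, hy'⟩ := hc.intermediate_value hz m0 hg ⟨hge, hs.le⟩
      exact hne y hy hy'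
    have h3 := hpos g hint (fun z hz => this z (Ioo_subset_Icc_self hz))
    rw [hi] at h3
    exact lt_irrefl _ h3

lemma aux_pd {F : ℝ × ℝ → ℝ} {U : Set (ℝ × ℝ)} (hU : IsOpen U) (hF : ContDiffOn ℝ 1 F U) :
    ContinuousOn F U ∧ ContinuousOn (pdr F) U ∧ ContinuousOn (pdz F) U ∧
    (∀ p ∈ U, HasDerivAt (fun s => F (s, p.2)) (pdr F p) p.1) ∧
    (∀ p ∈ U, HasDerivAt (fun s => F (p.1, s)) (pdz F p) p.2) := by
  have hfd : ∀ p ∈ U, HasFDerivAt F (fderiv ℝ F p) p := fun p hp =>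
    ((hF.differentiableOn (by norm_num)).differentiableAt (hU.mem_nhds hp)).hasFDerivAt
  have hr : ∀ p ∈ U, HasDerivAt (fun s => F (s, p.2)) (fderiv ℝ F p (1, 0)) p.1 := by
    intro p hp
    have h1 : HasDerivAt (fun s : ℝ => (s, p.2)) ((1 : ℝ), (0 : ℝ)) p.1 :=
      (hasDerivAt_id p.1).prodMk (hasDerivAt_const _ _)
    exact HasFDerivAt.comp_hasDerivAt (f := fun s : ℝ => (s, p.2)) p.1 (hfd p hp) h1
  have hz : ∀ p ∈ U, HasDerivAt (fun s => F (p.1, s)) (fderiv ℝ F p (0, 1)) p.2 := by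
    intro p hp
    have h1 : HasDerivAt (fun s : ℝ => (p.1, s)) ((0 : ℝ), (1 : ℝ)) p.2 :=
      (hasDerivAt_const _ _).prodMk (hasDerivAt_id p.2)
    exact HasFDerivAt.comp_hasDerivAt (f := fun s : ℝ => (p.1, s)) p.2 (hfd p hp) h1
  have er : ∀ p ∈ U, pdr F p = fderiv ℝ F p (1, 0) := fun p hp => (hr p hp).deriv
  have ez : ∀ p ∈ U, pdz F p = fderiv ℝ F p (0, 1) := fun p hp => (hz p hp).deriv
  have cf := hF.continuousOn_fderiv_of_isOpen hU (by norm_num)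
  refine ⟨hF.continuousOn, ?_, ?_, ?_, ?_⟩
  · exact (cf.clm_apply continuousOn_const).congr er
  · exact (cf.clm_apply continuousOn_const).congr ez
  · intro p hp; rw [er p hp]; exact hr p hp
  · intro p hp; rw [ez p hp]; exact hz p hp

lemma aux_rect2 {a b h : ℝ} (hab : a < b) (h0 : 0 < h) (hh : h ≤ 2 * (b - a)) (F : ℝ × ℝ → ℝ)
    (U : Set (ℝ × ℝ)) (hU : IsOpen U) (hF : ContDiffOn ℝ 1 F U) (hs : Icc a b ×ˢ Icc 0 h ⊆ U)
    (hz : ∀ r ∈ Ioo a b, ∃ z ∈ Icc 0 h, F (r, z) = 0) :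
    ∫ p in Ico a b ×ˢ Ioo 0 h, |F p| ^ 6 ≤
      480 * (b - a) ^ 2 * (∫ p in Ico a b ×ˢ Ioo 0 h, (pdr F p ^ 2 + pdz F p ^ 2)) ^ 3 := by
  obtain ⟨c0, cr, cz, dr, dz⟩ := aux_pd hU hF
  set π₀ : ℝ × ℝ → ℝ × ℝ := fun p => ((projIcc a b hab.le p.1 : ℝ), (projIcc 0 h h0.le p.2 : ℝ)) with hpi
  have cpi : Continuous π₀ := by
    apply Continuous.prodMk
    · exact continuous_subtype_val.comp (continuous_projIcc.comp continuous_fst)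
    · exact continuous_subtype_val.comp (continuous_projIcc.comp continuous_snd)
  have mpi : ∀ p, π₀ p ∈ U := fun p => hs ⟨Subtype.coe_prop _, Subtype.coe_prop _⟩
  have epi : ∀ r ∈ Icc a b, ∀ z ∈ Icc 0 h, π₀ (r, z) = (r, z) := by
    intro r hr z hz
    simp only [hpi]
    rw [projIcc_of_mem _ hr, projIcc_of_mem _ hz]
  have hP : (volume.restrict (Ico a b ×ˢ Ioo 0 h) : Measure (ℝ × ℝ)) =
      (volume.restrict (Ioo a b)).prod (volume.restrict (Ioo 0 h)) := by
    rw [Measure.volume_eq_prod, ← Measure.prod_restrict, Measure.restrict_congr_set (Ioo_ae_eq_Ico (a := a) (b := b))]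
  have ms : MeasurableSet (Ico a b ×ˢ Ioo 0 h) := measurableSet_Ico.prod measurableSet_Ioo
  have key := aux_rect hab h0 hh (F ∘ π₀) (pdr F ∘ π₀) (pdz F ∘ π₀)
    (c0.comp_continuous cpi mpi) (cr.comp_continuous cpi mpi) (cz.comp_continuous cpi mpi)
    (by
      intro z hz r hr
      have hr' := Ioo_subset_Icc_self hr
      have h1 := dr (r, z) (hs ⟨hr', hz⟩)
      simp only [Function.comp, epi r hr' z hz]
      refine h1.congr_of_eventuallyEq ?_
      filter_upwards [isOpen_Ioo.mem_nhds hr] with s hs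
      rw [epi s (Ioo_subset_Icc_self hs) z hz])
    (by
      intro r hr z hz
      have hz' := Ioo_subset_Icc_self hz
      have h1 := dz (r, z) (hs ⟨hr, hz'⟩)
      simp only [Function.comp, epi r hr z hz']
      refine h1.congr_of_eventuallyEq ?_
      filter_upwards [isOpen_Ioo.mem_nhds hz] with s hs
      rw [epi r hr s (Ioo_subset_Icc_self hs)])
    (by
      intro r hr
      obtain ⟨z, hzm, hz0⟩ := hz r hr
      refine ⟨z, hzm, ?_⟩
      simp only [Function.comp, epi r (Ioo_subset_Icc_self hr) z hzm, hz0]) _ hP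
  have epi' : ∀ p ∈ Ico a b ×ˢ Ioo 0 h, π₀ p = p := fun p hp =>
    epi p.1 (Ico_subset_Icc_self hp.1) p.2 (Ioo_subset_Icc_self hp.2)
  have g1 : ∫ p in Ico a b ×ˢ Ioo 0 h, |(F ∘ π₀) p| ^ 6 = ∫ p in Ico a b ×ˢ Ioo 0 h, |F p| ^ 6 := by
    apply setIntegral_congr_fun ms
    intro p hp
    simp only [Function.comp, epi' p hp]
  have g2 : ∫ p in Ico a b ×ˢ Ioo 0 h, ((pdr F ∘ π₀) p ^ 2 + (pdz F ∘ π₀) p ^ 2) =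
      ∫ p in Ico a b ×ˢ Ioo 0 h, (pdr F p ^ 2 + pdz F p ^ 2) := by
    apply setIntegral_congr_fun ms
    intro p hp
    simp only [Function.comp, epi' p hp]
  rw [← g1, ← g2]
  exact key

lemma aux_cube {ι : Type*} (s : Finset ι) (e : ι → ℝ) (he : ∀ i ∈ s, 0 ≤ e i) :
    ∑ i ∈ s, e i ^ 3 ≤ (∑ i ∈ s, e i) ^ 3 := by
  classical
  induction s using Finset.induction_on with
  | empty => simp
  | insert i s hi ih =>
    rw [Finset.sum_insert hi, Finset.sum_insert hi]
    have h1 := ih fun j hj => he j (Finset.mem_insert_of_mem hj)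
    have h2 := he i (Finset.mem_insert_self i s)
    have h3 : 0 ≤ ∑ j ∈ s, e j := Finset.sum_nonneg fun j hj => he j (Finset.mem_insert_of_mem hj)
    have : 0 ≤ e i * (∑ j ∈ s, e j) * (e i + ∑ j ∈ s, e j) := by positivity
    nlinarith

/-- Uniform Sobolev inequality on `D_m` with exponent 6, for axially symmetric
`C¹` functions on a neighborhood of the closure of `D_m` that either vanish on the horizontal
boundary or have vanishing vertical line integrals. -/
theorem uniform_sobolev_six :
    ∃ s₀ : ℝ, 0 < s₀ ∧
      ∀ (β : ℝ), 1 < β → β ≤ 1.1 →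
      ∀ (m : ℕ), 1 ≤ m →
      ∀ F : ℝ × ℝ → ℝ,
        (∃ U : Set (ℝ × ℝ), IsOpen U ∧ closure (Ddom β m) ⊆ U ∧ ContDiffOn ℝ 1 F U) →
        ((∀ p ∈ bdH β m, F p = 0) ∨
          (∀ c ∈ Set.Ioo (rW m) 1, (∫ z in vertSeg β m c, F (c, z)) = 0)) →
        (cylIntegral β m fun p => |F p| ^ (6 : ℕ)) ^ ((1 : ℝ) / 6) ≤
          s₀ * (cylIntegral β m fun p => (pdr F p) ^ 2 + (pdz F p) ^ 2) ^ ((1 : ℝ) / 2) := by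
  refine ⟨480 ^ ((1 : ℝ) / 6), by positivity, ?_⟩
  intro β hβ _ m hm F ⟨U, hU, hcl, hF⟩ hcond
  obtain ⟨c0, cr, cz, -, -⟩ := aux_pd hU hF
  have hsub : ∀ j ∈ Finset.Icc 1 m, Icc (rW j) (rW (j - 1)) ×ˢ Icc 0 (hH β j) ⊆ U := by
    intro j hj
    refine Subset.trans ?_ hcl
    have hj1 := (Finset.mem_Icc.1 hj).1
    have : Srect β j ⊆ Ddom β m := by
      unfold Ddom
      exact subset_biUnion_of_mem (u := fun j => Srect β j) (s := {j | j ∈ Finset.Icc 1 m}) hj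
    have h2 := closure_mono this
    have hlt : rW j < rW (j - 1) := by
      rw [aux_rW_pred hj1]; linarith [aux_rWpos j]
    rw [aux_Srect, closure_prod_eq, closure_Ico hlt.ne, closure_Ioo (aux_hHpos β j).ne] at h2
    exact h2
  have hms : ∀ j ∈ Finset.Icc 1 m, MeasurableSet (Srect β j) := by
    intro j _
    rw [aux_Srect]
    exact measurableSet_Ico.prod measurableSet_Ioo
  have hdisj : (↑(Finset.Icc 1 m) : Set ℕ).Pairwise (Function.onFun Disjoint fun j => Srect β j) := by
    intro i _ j _ hne
    simp only [Function.onFun]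
    rw [Set.disjoint_left]
    intro p hp hq
    exact hne (aux_uniq hp.1 hp.2.1 hq.1 hq.2.1)
  have hint : ∀ g : ℝ × ℝ → ℝ, ContinuousOn g U → ∀ j ∈ Finset.Icc 1 m,
      IntegrableOn g (Srect β j) := by
    intro g hg j hj
    rw [aux_Srect]
    exact ((hg.mono (hsub j hj)).integrableOn_compact (isCompact_Icc.prod isCompact_Icc)).mono_set
      (prod_mono Ico_subset_Icc_self Ioo_subset_Icc_self)
  have hsum : ∀ g : ℝ × ℝ → ℝ, ContinuousOn g U → cylIntegral β m g =
      ∑ j ∈ Finset.Icc 1 m, ∫ p in Srect β j, g p * (2 * π * p.1) := by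
    intro g hg
    unfold cylIntegral Ddom
    exact integral_biUnion_finset _ hms hdisj (hint _ (by fun_prop))
  set G : ℝ × ℝ → ℝ := fun p => pdr F p ^ 2 + pdz F p ^ 2 with hG
  have cG : ContinuousOn G U := by fun_prop
  have c6 : ContinuousOn (fun p => |F p| ^ 6) U := by fun_prop
  rw [hsum _ c6, hsum _ cG]
  have G0 : ∀ p, 0 ≤ G p := fun p => by positivity
  have hnn : ∀ g : ℝ × ℝ → ℝ, (∀ p, 0 ≤ g p) → ∀ j ∈ Finset.Icc 1 m,
      0 ≤ ∫ p in Srect β j, g p * (2 * π * p.1) := by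
    intro g hg j hj
    apply setIntegral_nonneg (hms j hj)
    intro p hp
    have := hg p
    have : 0 ≤ p.1 := (aux_rWpos j).le.trans hp.1
    positivity
  have hloc : ∀ j ∈ Finset.Icc 1 m, ∫ p in Srect β j, |F p| ^ 6 * (2 * π * p.1) ≤
      480 * (∫ p in Srect β j, G p * (2 * π * p.1)) ^ 3 := by
    intro j hj
    have hj1 := (Finset.mem_Icc.1 hj).1
    have w0 := aux_rWpos j
    have hpred := aux_rW_pred hj1
    have hz : ∀ r ∈ Ioo (rW j) (rW (j - 1)), ∃ z ∈ Icc 0 (hH β j), F (r, z) = 0 := by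
      intro r hr
      have r1 : rW m < r := (aux_rW_anti (Finset.mem_Icc.1 hj).2).trans_lt hr.1
      have r2 : r < 1 := hr.2.trans_le (by rw [← aux_rW_zero]; exact aux_rW_anti (Nat.zero_le _))
      rcases hcond with hc | hc
      · exact ⟨0, ⟨le_rfl, (aux_hHpos β j).le⟩, hc _ (Or.inl ⟨rfl, r1.le, r2.le⟩)⟩
      · have := hc r ⟨r1, r2⟩
        rw [aux_vert hj hr.1.le hr.2] at this
        apply aux_zero (aux_hHpos β j) _ _ this
        apply c0.comp (by fun_prop)
        intro z hz
        exact hsub j hj ⟨Ioo_subset_Icc_self hr, hz⟩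
    have key := aux_rect2 (a := rW j) (b := rW (j - 1)) (h := hH β j) (by linarith)
      (aux_hHpos β j) (by have := aux_hH_le hβ hj1; linarith) F U hU hF (hsub j hj) hz
    rw [← aux_Srect] at key
    have hba : rW (j - 1) - rW j = rW j := by linarith
    rw [hba] at key
    set w := rW j
    have u1 : ∫ p in Srect β j, |F p| ^ 6 * (2 * π * p.1) ≤
        (∫ p in Srect β j, |F p| ^ 6) * (2 * π * (2 * w)) := by
      rw [← integral_mul_const]
      apply setIntegral_mono_on (hint _ (by fun_prop) j hj) (hint _ (by fun_prop) j hj) (hms j hj)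
      intro p hp
      have : p.1 ≤ 2 * w := by rw [← hpred]; exact hp.2.1.le
      gcongr
    have u2 : (∫ p in Srect β j, G p) * (2 * π * w) ≤ ∫ p in Srect β j, G p * (2 * π * p.1) := by
      rw [← integral_mul_const]
      apply setIntegral_mono_on (hint _ (by fun_prop) j hj) (hint _ (by fun_prop) j hj) (hms j hj)
      intro p hp
      have : w ≤ p.1 := hp.1
      have := G0 p
      gcongr
    have E0 : 0 ≤ ∫ p in Srect β j, G p := setIntegral_nonneg (hms j hj) fun p _ => G0 p
    set E := ∫ p in Srect β j, G p
    have hpi := Real.pi_gt_three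
    calc _ ≤ _ := u1
      _ ≤ (480 * w ^ 2 * E ^ 3) * (2 * π * (2 * w)) := by gcongr
      _ = 480 * (w ^ 3 * E ^ 3) * (4 * π) := by ring
      _ ≤ 480 * (w ^ 3 * E ^ 3) * (2 * π) ^ 3 := by
        gcongr
        nlinarith [mul_pos Real.pi_pos Real.pi_pos, mul_pos (mul_pos Real.pi_pos Real.pi_pos) Real.pi_pos, mul_self_nonneg (π - 3)]
      _ = 480 * (E * (2 * π * w)) ^ 3 := by ring
      _ ≤ _ := by gcongr
  have tot : ∑ j ∈ Finset.Icc 1 m, ∫ p in Srect β j, |F p| ^ 6 * (2 * π * p.1) ≤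
      480 * (∑ j ∈ Finset.Icc 1 m, ∫ p in Srect β j, G p * (2 * π * p.1)) ^ 3 := by
    refine (Finset.sum_le_sum hloc).trans ?_
    rw [← Finset.mul_sum]
    gcongr
    exact aux_cube _ _ (hnn G G0)
  have n6 := Finset.sum_nonneg (hnn (fun p => |F p| ^ 6) (fun p => by positivity))
  have nG := Finset.sum_nonneg (hnn G G0)
  refine (Real.rpow_le_rpow n6 tot (by norm_num)).trans_eq ?_
  rw [Real.mul_rpow (by norm_num) (by positivity), ← Real.rpow_natCast, ← Real.rpow_mul nG]
  norm_num
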